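/- (Data processing inequality for quantized mutual information) If discrete random variables X, Y, V form a Markov chain X - Y - V in this order, then for every positive integer M, I(X;[V]_M) ≤ I(X;[Y]_M). -/

import Mathlib

/-!
The idea is to replace a randomized quantizer of `Y` by a deterministic one that is at least as
good.

Fix a quantizer `f` of `V`, let `q` be the joint law of `(X, f(V))` and let
`φ = log (q(x,m) / (q(x) q(m)))` be its information density. By Gibbs' inequality every joint law
`r ≪ q` with the same `X`-marginal satisfies `I(r) ≥ 𝔼_r φ`, with equality at `r = q`. The
right-hand side is linear in `r`. Conditionally on `Y = y`, the symbol `f(V)` is independent of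
`X`, so some constant symbol `g(y)` makes the conditional expectation of `φ` at least as large.
Hence `I(X; g(Y)) ≥ 𝔼 φ(X, g(Y)) ≥ 𝔼 φ(X, f(V)) = I(X; f(V))`.

Instead of maximizing `φ` we minimize the cost `C - φ ≥ 0`, set to `∞` where `q` vanishes. With
values in `ℝ≥0∞`, sums may be exchanged freely, and finiteness of the expected cost yields both
`r ≪ q` and the summability needed over infinite alphabets.
-/

open scoped BigOperators

/-- Mutual information (in bits) of a joint probability mass function `p` on `𝒳 × 𝒴`,
with the convention `0 · log 0 = 0`. -/
noncomputable def miBits {𝒳 𝒴 : Type*} (p : 𝒳 → 𝒴 → ℝ) : ℝ :=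
  ∑' x, ∑' y, p x y * Real.logb 2 (p x y / ((∑' y', p x y') * (∑' x', p x' y)))

/-- `p` is a joint probability mass function. -/
def IsJointPMF {𝒳 𝒴 : Type*} (p : 𝒳 → 𝒴 → ℝ) : Prop :=
  (∀ x y, 0 ≤ p x y) ∧ Summable (fun xy : 𝒳 × 𝒴 => p xy.1 xy.2) ∧ (∑' x, ∑' y, p x y) = 1

/-- Joint pmf of `(X, f(Y))` when `(X,Y) ~ p` and `f` is a deterministic `M`-level quantizer. -/
noncomputable def quantJoint {𝒳 𝒴 : Type*} (p : 𝒳 → 𝒴 → ℝ) {M : ℕ} (f : 𝒴 → Fin M) :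
    𝒳 → Fin M → ℝ :=
  fun x m => ∑' y, if f y = m then p x y else 0

/-- `I(X;[Y]_M)`: the best mutual information achievable by a deterministic `M`-level
quantizer of `Y`. -/
noncomputable def quantMI {𝒳 𝒴 : Type*} (p : 𝒳 → 𝒴 → ℝ) (M : ℕ) : ℝ :=
  ⨆ f : 𝒴 → Fin M, miBits (quantJoint p f)

/-- The information distillation function `ID_M(K, β)`. -/
noncomputable def ID (M K : ℕ) (β : ℝ) : ℝ :=
  sInf {v | ∃ p : Fin K → ℕ → ℝ, IsJointPMF p ∧ β ≤ miBits p ∧ v = quantMI p M}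

/-- Binary entropy function (bits). -/
noncomputable def hBin (t : ℝ) : ℝ :=
  -(t * Real.logb 2 t) - (1 - t) * Real.logb 2 (1 - t)

open scoped ENNReal

lemma sub_le_mul_log_div {a b : ℝ} (ha : 0 ≤ a) (hb : 0 ≤ b) (hab : b = 0 → a = 0) :
    a - b ≤ a * Real.log (a / b) := by
  rcases hb.eq_or_lt' with hb0 | hb_pos
  · simp [hab hb0, hb0]
  · have h := mul_nonneg hb (InformationTheory.klFun_nonneg (div_nonneg ha hb))
    have h_eq : b * InformationTheory.klFun (a / b) = a * Real.log (a / b) + b - a := by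
      rw [InformationTheory.klFun_apply]
      field_simp
    linarith

section Marginals

variable {α β : Type*} {q : α → β → ℝ}

/-- The marginal of `q : α → β → ℝ` on the first coordinate. -/
noncomputable def fstMarginal (q : α → β → ℝ) (x : α) : ℝ := ∑' y, q x y

/-- The marginal of `q : α → β → ℝ` on the second coordinate. -/
noncomputable def sndMarginal (q : α → β → ℝ) (y : β) : ℝ := ∑' x, q x y

/-- A joint law of finite mass on `α × β`, in curried form. Unlike for `IsJointPMF`, the total mass
need not be one; this makes the notion applicable to the slices `P(·, y, ·)` of a law on three
coordinates. -/
structure IsJointWeight (q : α → β → ℝ) : Prop where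
  nonneg : ∀ x y, 0 ≤ q x y
  summable : Summable fun t : α × β => q t.1 t.2

namespace IsJointWeight

lemma swap (hq : IsJointWeight q) : IsJointWeight fun y x => q x y :=
  ⟨fun y x => hq.nonneg x y, hq.summable.prod_symm⟩

lemma summable_row (hq : IsJointWeight q) (x : α) : Summable (q x) :=
  hq.summable.prod_factor x

lemma summable_fstMarginal (hq : IsJointWeight q) : Summable (fstMarginal q) :=
  hq.summable.prod

lemma summable_sndMarginal (hq : IsJointWeight q) : Summable (sndMarginal q) :=
  hq.swap.summable_fstMarginal

lemma fstMarginal_nonneg (hq : IsJointWeight q) (x : α) : 0 ≤ fstMarginal q x :=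
  tsum_nonneg (hq.nonneg x)

lemma sndMarginal_nonneg (hq : IsJointWeight q) (y : β) : 0 ≤ sndMarginal q y :=
  hq.swap.fstMarginal_nonneg y

lemma le_fstMarginal (hq : IsJointWeight q) (x : α) (y : β) : q x y ≤ fstMarginal q x :=
  (hq.summable_row x).le_tsum y fun y' _ => hq.nonneg x y'

lemma le_sndMarginal (hq : IsJointWeight q) (x : α) (y : β) : q x y ≤ sndMarginal q y :=
  hq.swap.le_fstMarginal y x

lemma tsum_fstMarginal (hq : IsJointWeight q) :
    ∑' x, fstMarginal q x = ∑' t : α × β, q t.1 t.2 :=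
  hq.summable.tsum_prod.symm

lemma tsum_sndMarginal (hq : IsJointWeight q) :
    ∑' y, sndMarginal q y = ∑' t : α × β, q t.1 t.2 :=
  hq.swap.tsum_fstMarginal.trans ((Equiv.prodComm β α).tsum_eq fun t => q t.1 t.2)

lemma ofReal_fstMarginal (hq : IsJointWeight q) (x : α) :
    ENNReal.ofReal (fstMarginal q x) = ∑' y, ENNReal.ofReal (q x y) :=
  ENNReal.ofReal_tsum_of_nonneg (hq.nonneg x) (hq.summable_row x)

lemma ofReal_tsum_fstMarginal (hq : IsJointWeight q) :
    ENNReal.ofReal (∑' x, fstMarginal q x) = ∑' x, ∑' y, ENNReal.ofReal (q x y) := by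
  rw [ENNReal.ofReal_tsum_of_nonneg hq.fstMarginal_nonneg hq.summable_fstMarginal]
  exact tsum_congr hq.ofReal_fstMarginal

lemma sndMarginal_reweight_le {c : β → ℝ} (hc : ∀ y, 0 ≤ c y) (y : β) :
    sndMarginal (fun x y => c y * (q x y / sndMarginal q y)) y ≤ c y := by
  rw [sndMarginal, tsum_mul_left, tsum_div_const]
  exact mul_le_of_le_one_right (hc y) (div_self_le_one _)

lemma reweight (hq : IsJointWeight q) {c : β → ℝ} (hc : ∀ y, 0 ≤ c y) (hcs : Summable c) :
    IsJointWeight fun x y => c y * (q x y / sndMarginal q y) := by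
  have h_nonneg (x : α) (y : β) : 0 ≤ c y * (q x y / sndMarginal q y) :=
    mul_nonneg (hc y) (div_nonneg (hq.nonneg x y) (hq.sndMarginal_nonneg y))
  have h_col (y : β) : Summable fun x => c y * (q x y / sndMarginal q y) :=
    ((hq.swap.summable_row y).div_const _).mul_left _
  have h_snd : Summable (sndMarginal fun x y => c y * (q x y / sndMarginal q y)) :=
    hcs.of_nonneg_of_le (fun y => tsum_nonneg fun x => h_nonneg x y) (sndMarginal_reweight_le hc)
  have h_swap := (summable_prod_of_nonneg fun t : β × α => h_nonneg t.2 t.1).2 ⟨h_col, h_snd⟩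
  exact ⟨h_nonneg, h_swap.prod_symm⟩

lemma tsum_reweight_le (hq : IsJointWeight q) {c : β → ℝ} (hc : ∀ y, 0 ≤ c y)
    (hcs : Summable c) :
    ∑' t : α × β, c t.2 * (q t.1 t.2 / sndMarginal q t.2) ≤ ∑' y, c y := by
  have hb := hq.reweight hc hcs
  rw [← hb.tsum_sndMarginal]
  exact hb.summable_sndMarginal.tsum_le_tsum (sndMarginal_reweight_le hc) hcs

end IsJointWeight

end Marginals

section InfoDensity

variable {α β : Type*} {q r : α → β → ℝ}

/-- The information density `log (q(x,m) / (q(x) q(m)))`, in nats. -/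
noncomputable def infoDensity (q : α → β → ℝ) (x : α) (m : β) : ℝ :=
  Real.log (q x m / (fstMarginal q x * sndMarginal q m))

lemma miBits_eq_tsum_infoDensity_div
    (hs : Summable fun t : α × β => q t.1 t.2 * infoDensity q t.1 t.2) :
    miBits q = (∑' t : α × β, q t.1 t.2 * infoDensity q t.1 t.2) / Real.log 2 := by
  simp_rw [hs.tsum_prod, ← tsum_div_const, mul_div_assoc]
  rfl

lemma infoDensity_le_neg_log_sndMarginal (hq : IsJointWeight q) {x : α} {m : β}
    (hqm : q x m ≠ 0) : infoDensity q x m ≤ -Real.log (sndMarginal q m) := by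
  have h_pos : 0 < q x m := (hq.nonneg x m).lt_of_ne' hqm
  have h_fst : 0 < fstMarginal q x := h_pos.trans_le (hq.le_fstMarginal x m)
  have h_snd : 0 < sndMarginal q m := h_pos.trans_le (hq.le_sndMarginal x m)
  rw [← Real.log_inv, infoDensity, ← div_div]
  refine Real.log_le_log (by positivity) ?_
  rw [div_le_iff₀ h_snd, inv_mul_cancel₀ h_snd.ne']
  exact div_le_one_of_le₀ (hq.le_fstMarginal x m) h_fst.le

lemma exists_infoDensity_le [Finite β] (hq : IsJointWeight q) :
    ∃ C : ℝ, ∀ x m, q x m ≠ 0 → infoDensity q x m ≤ C := by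
  obtain ⟨C, hC⟩ := (Set.finite_range fun m => -Real.log (sndMarginal q m)).bddAbove
  exact ⟨C, fun x m hqm =>
    (infoDensity_le_neg_log_sndMarginal hq hqm).trans (hC (Set.mem_range_self m))⟩

lemma mul_infoDensity_le_div_sndMarginal (hq : IsJointWeight q) (x : α) (m : β) :
    q x m * infoDensity q x m ≤ q x m / sndMarginal q m := by
  rcases (hq.nonneg x m).eq_or_lt' with h0 | h_pos
  · simp [h0]
  · rw [div_eq_mul_inv]
    gcongr
    have h_snd : 0 < sndMarginal q m := h_pos.trans_le (hq.le_sndMarginal x m)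
    calc infoDensity q x m ≤ -Real.log (sndMarginal q m) :=
          infoDensity_le_neg_log_sndMarginal hq h_pos.ne'
      _ = Real.log (sndMarginal q m)⁻¹ := (Real.log_inv _).symm
      _ ≤ (sndMarginal q m)⁻¹ := Real.log_le_self (by positivity)

lemma sub_marginal_mul_le_mul_infoDensity (hq : IsJointWeight q) (x : α) (m : β) :
    q x m - fstMarginal q x * sndMarginal q m ≤ q x m * infoDensity q x m := by
  refine sub_le_mul_log_div (hq.nonneg x m)
    (mul_nonneg (hq.fstMarginal_nonneg x) (hq.sndMarginal_nonneg m)) fun h => ?_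
  refine le_antisymm ?_ (hq.nonneg x m)
  rcases mul_eq_zero.1 h with h | h
  · exact h ▸ hq.le_fstMarginal x m
  · exact h ▸ hq.le_sndMarginal x m

lemma summable_div_sndMarginal [Finite β] (hq : IsJointWeight q) :
    Summable fun t : α × β => q t.1 t.2 / sndMarginal q t.2 := by
  simpa only [one_mul] using
    (hq.reweight (c := fun _ => 1) (fun _ => zero_le_one) Summable.of_finite).summable

lemma summable_mul_infoDensity [Finite β] (hq : IsJointWeight q) :
    Summable fun t : α × β => q t.1 t.2 * infoDensity q t.1 t.2 := by
  have h_lower : Summable fun t : α × β => q t.1 t.2 - fstMarginal q t.1 * sndMarginal q t.2 :=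
    hq.summable.sub (hq.summable_fstMarginal.mul_of_nonneg hq.summable_sndMarginal
      hq.fstMarginal_nonneg hq.sndMarginal_nonneg)
  have h_gap := ((summable_div_sndMarginal hq).sub h_lower).of_nonneg_of_le
    (fun t => sub_nonneg.2 (sub_marginal_mul_le_mul_infoDensity hq t.1 t.2))
    (fun t => sub_le_sub_right (mul_infoDensity_le_div_sndMarginal hq t.1 t.2) _)
  simpa only [sub_add_cancel] using h_gap.add h_lower

lemma miBits_le_card_div_log_two [Fintype β] (hq : IsJointWeight q) :
    miBits q ≤ Fintype.card β / Real.log 2 := by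
  have hs := summable_mul_infoDensity hq
  rw [miBits_eq_tsum_infoDensity_div hs]
  refine div_le_div_of_nonneg_right ?_ (Real.log_pos one_lt_two).le
  calc ∑' t : α × β, q t.1 t.2 * infoDensity q t.1 t.2
      ≤ ∑' t : α × β, q t.1 t.2 / sndMarginal q t.2 :=
        hs.tsum_le_tsum (fun t => mul_infoDensity_le_div_sndMarginal hq t.1 t.2)
          (summable_div_sndMarginal hq)
    _ ≤ ∑' _ : β, (1 : ℝ) := by
        simpa only [one_mul] using
          hq.tsum_reweight_le (c := fun _ => 1) (fun _ => zero_le_one) Summable.of_finite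
    _ = Fintype.card β := by simp

/-- The backward channel of `q` applied to the second marginal of `r` is the reference law in
Gibbs' inequality: the difference of the densities of `r` and `q` is the log-likelihood ratio of `r`
to it. -/
lemma sub_reweight_le_mul_infoDensity_sub (hq : IsJointWeight q) (hr : IsJointWeight r)
    (h_fst : fstMarginal q = fstMarginal r) {x : α} {m : β} (hrq : q x m = 0 → r x m = 0) :
    r x m - sndMarginal r m * (q x m / sndMarginal q m)
      ≤ r x m * infoDensity r x m - r x m * infoDensity q x m := by
  have h_ref : 0 ≤ sndMarginal r m * (q x m / sndMarginal q m) :=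
    mul_nonneg (hr.sndMarginal_nonneg m) (div_nonneg (hq.nonneg x m) (hq.sndMarginal_nonneg m))
  rcases (hr.nonneg x m).eq_or_lt' with h0 | hr_pos
  · simpa only [h0, zero_mul, sub_zero, zero_sub, neg_nonpos] using h_ref
  · have hq_pos : 0 < q x m := (hq.nonneg x m).lt_of_ne' fun h => hr_pos.ne' (hrq h)
    have hr_fst : 0 < fstMarginal r x := hr_pos.trans_le (hr.le_fstMarginal x m)
    have hr_snd : 0 < sndMarginal r m := hr_pos.trans_le (hr.le_sndMarginal x m)
    have hq_snd : 0 < sndMarginal q m := hq_pos.trans_le (hq.le_sndMarginal x m)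
    have h_log : infoDensity r x m - infoDensity q x m
        = Real.log (r x m / (sndMarginal r m * (q x m / sndMarginal q m))) := by
      rw [infoDensity, infoDensity, h_fst, ← Real.log_div (by positivity) (by positivity)]
      congr 1
      field_simp
    rw [← mul_sub, h_log]
    exact sub_le_mul_log_div hr_pos.le h_ref fun h => absurd h (by positivity)

lemma tsum_mul_infoDensity_le_tsum_mul_infoDensity (hq : IsJointWeight q) (hr : IsJointWeight r)
    (h_fst : fstMarginal q = fstMarginal r) (hrq : ∀ x m, q x m = 0 → r x m = 0)
    (hs_q : Summable fun t : α × β => r t.1 t.2 * infoDensity q t.1 t.2)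
    (hs_r : Summable fun t : α × β => r t.1 t.2 * infoDensity r t.1 t.2) :
    ∑' t : α × β, r t.1 t.2 * infoDensity q t.1 t.2
      ≤ ∑' t : α × β, r t.1 t.2 * infoDensity r t.1 t.2 := by
  have h_ref := (hq.reweight hr.sndMarginal_nonneg hr.summable_sndMarginal).summable
  have h_mass := hq.tsum_reweight_le hr.sndMarginal_nonneg hr.summable_sndMarginal
  rw [hr.tsum_sndMarginal] at h_mass
  have h_gibbs := (hr.summable.sub h_ref).tsum_le_tsum
    (fun t => sub_reweight_le_mul_infoDensity_sub hq hr h_fst (hrq t.1 t.2)) (hs_r.sub hs_q)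
  rw [hr.summable.tsum_sub h_ref, hs_r.tsum_sub hs_q] at h_gibbs
  linarith

end InfoDensity

section InfoCost

variable {α β : Type*} {q r : α → β → ℝ} {C : ℝ}

open Classical in
/-- The cost `C - φ(x,m)`, where `φ` is the information density of `q` and `C` is meant to be an
upper bound for `φ` on the support of `q`; it is infinite off the support, so that a law of finite
expected cost is absolutely continuous with respect to `q`. -/
noncomputable def infoCost (q : α → β → ℝ) (C : ℝ) (x : α) (m : β) : ℝ≥0∞ :=
  if q x m = 0 then ∞ else ENNReal.ofReal (C - infoDensity q x m)

/-- The expectation of a cost `d` under a joint law `r`. -/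
noncomputable def expectedCost (r : α → β → ℝ) (d : α → β → ℝ≥0∞) : ℝ≥0∞ :=
  ∑' t : α × β, ENNReal.ofReal (r t.1 t.2) * d t.1 t.2

lemma expectedCost_eq_tsum_tsum (r : α → β → ℝ) (d : α → β → ℝ≥0∞) :
    expectedCost r d = ∑' x, ∑' m, ENNReal.ofReal (r x m) * d x m :=
  ENNReal.tsum_prod (f := fun x m => ENNReal.ofReal (r x m) * d x m)

lemma eq_zero_of_expectedCost_infoCost_ne_top (hr : ∀ x m, 0 ≤ r x m)
    (h_fin : expectedCost r (infoCost q C) ≠ ∞) (x : α) (m : β) (hqm : q x m = 0) :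
    r x m = 0 := by
  by_contra hrm
  refine ENNReal.ne_top_of_tsum_ne_top h_fin (x, m) ?_
  simp [infoCost, hqm, ENNReal.mul_top, (hr x m).lt_of_ne' hrm]

lemma expectedCost_infoCost_eq_tsum (hr : ∀ x m, 0 ≤ r x m)
    (hrq : ∀ x m, q x m = 0 → r x m = 0) :
    expectedCost r (infoCost q C)
      = ∑' t : α × β, ENNReal.ofReal (r t.1 t.2 * (C - infoDensity q t.1 t.2)) := by
  refine tsum_congr fun t => ?_
  by_cases hqt : q t.1 t.2 = 0
  · simp [hrq t.1 t.2 hqt]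
  · rw [infoCost, if_neg hqt, ENNReal.ofReal_mul (hr t.1 t.2)]

lemma mul_sub_infoDensity_nonneg (hr : ∀ x m, 0 ≤ r x m) (hrq : ∀ x m, q x m = 0 → r x m = 0)
    (hC : ∀ x m, q x m ≠ 0 → infoDensity q x m ≤ C) (x : α) (m : β) :
    0 ≤ r x m * (C - infoDensity q x m) := by
  by_cases hqm : q x m = 0
  · simp [hrq x m hqm]
  · exact mul_nonneg (hr x m) (sub_nonneg.2 (hC x m hqm))

lemma expectedCost_infoCost_self_ne_top [Finite β] (hq : IsJointWeight q) :
    expectedCost q (infoCost q C) ≠ ∞ := by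
  rw [expectedCost_infoCost_eq_tsum hq.nonneg fun _ _ => id]
  simp_rw [mul_sub]
  exact ((hq.summable.mul_right C).sub (summable_mul_infoDensity hq)).tsum_ofReal_ne_top

lemma hasSum_mul_infoDensity (hr : IsJointWeight r)
    (hC : ∀ x m, q x m ≠ 0 → infoDensity q x m ≤ C)
    (h_fin : expectedCost r (infoCost q C) ≠ ∞) :
    HasSum (fun t : α × β => r t.1 t.2 * infoDensity q t.1 t.2)
      ((∑' t : α × β, r t.1 t.2) * C - (expectedCost r (infoCost q C)).toReal) := by
  have hrq := eq_zero_of_expectedCost_infoCost_ne_top hr.nonneg h_fin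
  rw [expectedCost_infoCost_eq_tsum hr.nonneg hrq] at h_fin ⊢
  have h_cost := ENNReal.hasSum_toReal h_fin
  rw [← ENNReal.tsum_toReal_eq (ENNReal.ne_top_of_tsum_ne_top h_fin)] at h_cost
  simp only [ENNReal.toReal_ofReal (mul_sub_infoDensity_nonneg hr.nonneg hrq hC _ _)] at h_cost
  simpa only [mul_sub, sub_sub_cancel] using (hr.summable.hasSum.mul_right C).sub h_cost

theorem miBits_le_miBits_of_expectedCost_le [Finite β] (hq : IsJointWeight q)
    (hr : IsJointWeight r) (h_fst : fstMarginal q = fstMarginal r)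
    (hC : ∀ x m, q x m ≠ 0 → infoDensity q x m ≤ C)
    (h_cost : expectedCost r (infoCost q C) ≤ expectedCost q (infoCost q C)) :
    miBits q ≤ miBits r := by
  have hq_fin := expectedCost_infoCost_self_ne_top (C := C) hq
  have hr_fin := ne_top_of_le_ne_top hq_fin h_cost
  have hrq := hasSum_mul_infoDensity hr hC hr_fin
  have h_mass : ∑' t : α × β, q t.1 t.2 = ∑' t : α × β, r t.1 t.2 := by
    rw [← hq.tsum_fstMarginal, h_fst, hr.tsum_fstMarginal]
  rw [miBits_eq_tsum_infoDensity_div (summable_mul_infoDensity hq),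
    miBits_eq_tsum_infoDensity_div (summable_mul_infoDensity hr)]
  refine div_le_div_of_nonneg_right ?_ (Real.log_pos one_lt_two).le
  calc ∑' t : α × β, q t.1 t.2 * infoDensity q t.1 t.2
      = (∑' t : α × β, q t.1 t.2) * C - (expectedCost q (infoCost q C)).toReal :=
        (hasSum_mul_infoDensity hq hC hq_fin).tsum_eq
    _ ≤ (∑' t : α × β, r t.1 t.2) * C - (expectedCost r (infoCost q C)).toReal := by
        rw [h_mass]
        exact sub_le_sub_left (ENNReal.toReal_mono hq_fin h_cost) _
    _ = ∑' t : α × β, r t.1 t.2 * infoDensity q t.1 t.2 := hrq.tsum_eq.symm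
    _ ≤ ∑' t : α × β, r t.1 t.2 * infoDensity r t.1 t.2 :=
        tsum_mul_infoDensity_le_tsum_mul_infoDensity hq hr h_fst
          (eq_zero_of_expectedCost_infoCost_ne_top hr.nonneg hr_fin) hrq.summable
          (summable_mul_infoDensity hr)

end InfoCost

section Quantizers

variable {α β γ : Type*} {M : ℕ} {P : α → β → ℝ}

lemma summable_ite_of_summable {u : β → ℝ} (hu : Summable u) (p : β → Prop) [DecidablePred p] :
    Summable fun y => if p y then u y else 0 :=
  (hu.indicator {y | p y}).congr fun y => by simp [Set.indicator_apply]

lemma quantJoint_nonneg (hP : ∀ x y, 0 ≤ P x y) (f : β → Fin M) (x : α) (m : Fin M) :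
    0 ≤ quantJoint P f x m :=
  tsum_nonneg fun y => by split_ifs <;> simp [hP x y]

lemma fstMarginal_quantJoint (hP : ∀ x, Summable (P x)) (f : β → Fin M) :
    fstMarginal (quantJoint P f) = fstMarginal P := by
  ext x
  simp only [fstMarginal, quantJoint, tsum_fintype]
  rw [← Summable.tsum_finsetSum fun m _ => summable_ite_of_summable (hP x) (f · = m)]
  simp only [Finset.sum_ite_eq, Finset.mem_univ, if_true]

lemma isJointWeight_quantJoint (hP : IsJointWeight P) (f : β → Fin M) :
    IsJointWeight (quantJoint P f) := by
  have h_nonneg := quantJoint_nonneg hP.nonneg f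
  have h_fst : Summable (fstMarginal (quantJoint P f)) := by
    rw [fstMarginal_quantJoint hP.summable_row]
    exact hP.summable_fstMarginal
  exact ⟨h_nonneg, (summable_prod_of_nonneg fun t => h_nonneg t.1 t.2).2
    ⟨fun _ => Summable.of_finite, h_fst⟩⟩

lemma ofReal_quantJoint (hP : IsJointWeight P) (f : β → Fin M) (x : α) (m : Fin M) :
    ENNReal.ofReal (quantJoint P f x m)
      = ∑' y, if f y = m then ENNReal.ofReal (P x y) else 0 := by
  rw [quantJoint, ENNReal.ofReal_tsum_of_nonneg (fun y => by split_ifs <;> simp [hP.nonneg x y])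
    (summable_ite_of_summable (hP.summable_row x) (f · = m))]
  simp only [apply_ite ENNReal.ofReal, ENNReal.ofReal_zero]

lemma expectedCost_quantJoint (hP : IsJointWeight P) (f : β → Fin M) (d : α → Fin M → ℝ≥0∞) :
    expectedCost (quantJoint P f) d = expectedCost P fun x y => d x (f y) := by
  rw [expectedCost_eq_tsum_tsum, expectedCost_eq_tsum_tsum]
  refine tsum_congr fun x => ?_
  simp_rw [ofReal_quantJoint hP, ← ENNReal.tsum_mul_right]
  rw [ENNReal.tsum_comm]
  simp only [ite_mul, zero_mul, tsum_fintype, Finset.sum_ite_eq, Finset.mem_univ, if_true]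

lemma miBits_quantJoint_le_quantMI (hP : IsJointWeight P) (f : β → Fin M) :
    miBits (quantJoint P f) ≤ quantMI P M := by
  refine le_ciSup (f := fun g : β → Fin M => miBits (quantJoint P g))
    ⟨Fintype.card (Fin M) / Real.log 2, ?_⟩ f
  rintro _ ⟨g, rfl⟩
  exact miBits_le_card_div_log_two (isJointWeight_quantJoint hP g)

end Quantizers

section MarkovChain

variable {α β γ δ : Type*} {M : ℕ} {P : α → β × γ → ℝ}

lemma quantJoint_tsum_snd (hP : ∀ x, Summable (P x)) (g : β → Fin M) :
    quantJoint (fun x y => ∑' v, P x (y, v)) g = quantJoint P (g ∘ Prod.fst) := by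
  ext x m
  simp only [quantJoint, Function.comp_apply]
  rw [(summable_ite_of_summable (hP x) (g ·.1 = m)).tsum_prod]
  refine tsum_congr fun y => ?_
  split_ifs <;> simp

lemma quantJoint_tsum_fst (hP : ∀ x, Summable (P x)) (f : γ → Fin M) :
    quantJoint (fun x v => ∑' y, P x (y, v)) f = quantJoint P (f ∘ Prod.snd) := by
  refine (quantJoint_tsum_snd (P := fun x t => P x t.swap) (fun x => (hP x).prod_symm) f).trans ?_
  ext x m
  exact (Equiv.prodComm γ β).tsum_eq fun t => if f t.2 = m then P x t else 0

lemma IsJointWeight.tsum_snd (hP : IsJointWeight P) :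
    IsJointWeight fun x y => ∑' v, P x (y, v) :=
  ⟨fun x y => tsum_nonneg fun v => hP.nonneg x (y, v),
    ((Equiv.prodAssoc α β γ).summable_iff.2 hP.summable).prod⟩

lemma IsJointWeight.slice (hP : IsJointWeight P) (y : β) :
    IsJointWeight fun x v => P x (y, v) :=
  ⟨fun x v => hP.nonneg x (y, v),
    hP.summable.comp_injective (i := fun t : α × γ => (t.1, y, t.2)) fun s t h => by
      simpa [Prod.ext_iff] using h⟩

lemma expectedCost_eq_tsum_slice (d : α → β × γ → ℝ≥0∞) :
    expectedCost P d
      = ∑' y, expectedCost (fun x v => P x (y, v)) fun x v => d x (y, v) := by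
  simp_rw [expectedCost_eq_tsum_tsum]
  rw [ENNReal.tsum_comm (α := β)]
  exact tsum_congr fun x =>
    ENNReal.tsum_prod (f := fun y v => ENNReal.ofReal (P x (y, v)) * d x (y, v))

/-- The two coordinates are independent under the joint law `w`, whose total mass need not be
one. -/
def IsProductWeight (w : α → γ → ℝ) : Prop :=
  ∀ x v, w x v * ∑' x', fstMarginal w x' = fstMarginal w x * sndMarginal w v

lemma IsProductWeight.ofReal_mass_mul_expectedCost {w : α → γ → ℝ} (h_prod : IsProductWeight w)
    (hw : IsJointWeight w) (d : α → γ → ℝ≥0∞) :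
    ENNReal.ofReal (∑' x, fstMarginal w x) * expectedCost w d
      = ∑' v, ENNReal.ofReal (sndMarginal w v)
          * ∑' x, ENNReal.ofReal (fstMarginal w x) * d x v := by
  rw [expectedCost_eq_tsum_tsum, ENNReal.tsum_comm, ← ENNReal.tsum_mul_left]
  refine tsum_congr fun v => ?_
  rw [← ENNReal.tsum_mul_left, ← ENNReal.tsum_mul_left]
  refine tsum_congr fun x => ?_
  rw [← mul_assoc, ← mul_assoc, ← ENNReal.ofReal_mul' (hw.nonneg x v),
    ← ENNReal.ofReal_mul (hw.sndMarginal_nonneg v), mul_comm _ (w x v), h_prod x v,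
    mul_comm (sndMarginal w v)]

lemma IsProductWeight.exists_const_expectedCost_le [Finite δ] [Nonempty δ] {w : α → γ → ℝ}
    (h_prod : IsProductWeight w) (hw : IsJointWeight w) (f : γ → δ) (d : α → δ → ℝ≥0∞) :
    ∃ k, expectedCost w (fun x _ => d x k) ≤ expectedCost w fun x v => d x (f v) := by
  obtain ⟨k, hk⟩ := Finite.exists_min fun k => ∑' x, ENNReal.ofReal (fstMarginal w x) * d x k
  refine ⟨k, ?_⟩
  rcases eq_or_ne (ENNReal.ofReal (∑' x, fstMarginal w x)) 0 with h_mass | h_mass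
  · rw [hw.ofReal_tsum_fstMarginal] at h_mass
    simp only [ENNReal.tsum_eq_zero] at h_mass
    simp [expectedCost, h_mass]
  · rw [← ENNReal.mul_le_mul_iff_right h_mass ENNReal.ofReal_ne_top,
      h_prod.ofReal_mass_mul_expectedCost hw, h_prod.ofReal_mass_mul_expectedCost hw]
    exact ENNReal.tsum_le_tsum fun v => mul_le_mul_right (hk (f v)) _

lemma exists_expectedCost_comp_fst_le [Finite δ] [Nonempty δ] (hP : IsJointWeight P)
    (h_markov : ∀ y, IsProductWeight fun x v => P x (y, v)) (f : γ → δ) (d : α → δ → ℝ≥0∞) :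
    ∃ g : β → δ,
      expectedCost P (fun x t => d x (g t.1)) ≤ expectedCost P fun x t => d x (f t.2) := by
  choose g hg using fun y => (h_markov y).exists_const_expectedCost_le (hP.slice y) f d
  refine ⟨g, ?_⟩
  rw [expectedCost_eq_tsum_slice, expectedCost_eq_tsum_slice]
  exact ENNReal.tsum_le_tsum hg

lemma exists_miBits_quantJoint_comp_fst_ge [NeZero M] (hP : IsJointWeight P)
    (h_markov : ∀ y, IsProductWeight fun x v => P x (y, v)) (f : γ → Fin M) :
    ∃ g : β → Fin M,
      miBits (quantJoint P (f ∘ Prod.snd)) ≤ miBits (quantJoint P (g ∘ Prod.fst)) := by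
  have hq := isJointWeight_quantJoint hP (f ∘ Prod.snd)
  obtain ⟨C, hC⟩ := exists_infoDensity_le hq
  obtain ⟨g, hg⟩ := exists_expectedCost_comp_fst_le hP h_markov f
    (infoCost (quantJoint P (f ∘ Prod.snd)) C)
  have hr := isJointWeight_quantJoint hP (g ∘ Prod.fst)
  refine ⟨g, miBits_le_miBits_of_expectedCost_le hq hr ?_ hC ?_⟩
  · rw [fstMarginal_quantJoint hP.summable_row, fstMarginal_quantJoint hP.summable_row]
  · rwa [expectedCost_quantJoint hP, expectedCost_quantJoint hP]

end MarkovChain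

theorem quantized_data_processing_general {𝒳 𝒴 𝒱 : Type*} (p : 𝒳 → 𝒴 → 𝒱 → ℝ)
    (hnn : ∀ x y v, 0 ≤ p x y v)
    (hsum : Summable (fun t : 𝒳 × 𝒴 × 𝒱 => p t.1 t.2.1 t.2.2))
    (hmarkov : ∀ x y v,
      p x y v * (∑' x', ∑' v', p x' y v') = (∑' v', p x y v') * (∑' x', p x' y v))
    (M : ℕ) (hM : 0 < M) :
    quantMI (fun x v => ∑' y, p x y v) M ≤ quantMI (fun x y => ∑' v, p x y v) M := by
  have : NeZero M := ⟨hM.ne'⟩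
  have hP : IsJointWeight fun x (t : 𝒴 × 𝒱) => p x t.1 t.2 := ⟨fun x t => hnn x t.1 t.2, hsum⟩
  refine ciSup_le fun f => ?_
  obtain ⟨g, hg⟩ := exists_miBits_quantJoint_comp_fst_ge hP (fun y x v => hmarkov x y v) f
  calc miBits (quantJoint (fun x v => ∑' y, p x y v) f)
      = miBits (quantJoint (fun x (t : 𝒴 × 𝒱) => p x t.1 t.2) (f ∘ Prod.snd)) :=
        congrArg miBits (quantJoint_tsum_fst hP.summable_row f)
    _ ≤ miBits (quantJoint (fun x (t : 𝒴 × 𝒱) => p x t.1 t.2) (g ∘ Prod.fst)) := hg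
    _ = miBits (quantJoint (fun x y => ∑' v, p x y v) g) :=
        congrArg miBits (quantJoint_tsum_snd hP.summable_row g).symm
    _ ≤ quantMI (fun x y => ∑' v, p x y v) M := miBits_quantJoint_le_quantMI hP.tsum_snd g

/-- Proposition 3 (Data processing inequality): if `X - Y - V` is a Markov chain,
then `I(X;[V]_M) ≤ I(X;[Y]_M)`. The Markov property is expressed as
`P(x,y,v) P(y) = P(x,y) P(y,v)` for all `x, y, v`. -/
theorem quantized_data_processing {𝒳 𝒴 𝒱 : Type*} [Countable 𝒳] [Countable 𝒴] [Countable 𝒱]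
    (p : 𝒳 → 𝒴 → 𝒱 → ℝ)
    (hnn : ∀ x y v, 0 ≤ p x y v)
    (hsum : Summable (fun t : 𝒳 × 𝒴 × 𝒱 => p t.1 t.2.1 t.2.2))
    (htot : (∑' x, ∑' y, ∑' v, p x y v) = 1)
    (hmarkov : ∀ x y v,
      p x y v * (∑' x', ∑' v', p x' y v') = (∑' v', p x y v') * (∑' x', p x' y v))
    (M : ℕ) (hM : 0 < M) :
    quantMI (fun x v => ∑' y, p x y v) M ≤ quantMI (fun x y => ∑' v, p x y v) M :=
  quantized_data_processing_general p hnn hsum hmarkov M hM
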